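/- Let V be a finite-dimensional vector space over the finite field 𝔽_q. For all subspaces S, T, U ⊆ V, 𝔑(S ∩ T) + 𝔑(T ∩ U) ≤ 𝔑(S ∩ U) + 𝔑(T). -/

import Mathlib

/-!
Common setup: `V` is a finite-dimensional vector space over a finite field `F`.
An *atom* is a one-dimensional subspace of `V`.  An *atomic decomposition* of a
subspace `S ⊆ V` is a finite set of atoms whose join (subspace sum) is `S`;
it is *minimal* if no proper subset is an atomic decomposition of `S`.
`NN S` is the number of minimal atomic decompositions of `S`.
-/

variable {F V : Type*} [Field F] [Fintype F] [AddCommGroup V] [Module F V]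
  [FiniteDimensional F V]

/-- `𝔞` is an atomic decomposition of `S`. -/
def IsAtomicDecomp (S : Submodule F V) (𝔞 : Finset (Submodule F V)) : Prop :=
  (∀ A ∈ 𝔞, Module.finrank F A = 1) ∧ 𝔞.sup id = S

/-- `𝔞` is a minimal atomic decomposition of `S`. -/
def IsMinAtomicDecomp (S : Submodule F V) (𝔞 : Finset (Submodule F V)) : Prop :=
  IsAtomicDecomp S 𝔞 ∧ ∀ 𝔟 ⊂ 𝔞, ¬ IsAtomicDecomp S 𝔟

/-- `NN S` is the number `𝔑(S)` of minimal atomic decompositions of `S`. -/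
noncomputable def NN (S : Submodule F V) : ℕ :=
  Set.ncard {𝔞 : Finset (Submodule F V) | IsMinAtomicDecomp S 𝔞}

omit [Fintype F] [FiniteDimensional F V] in
/-- Adding an atom outside `A` to a minimal decomposition of `A` gives a minimal decomposition
of the join. -/
lemma IsMinAtomicDecomp.insert_atom [DecidableEq (Submodule F V)] {A P : Submodule F V}
    {x : Finset (Submodule F V)} (hx : IsMinAtomicDecomp A x)
    (hP : Module.finrank F P = 1) (hPA : ¬ P ≤ A) :
    IsMinAtomicDecomp (A ⊔ P) (insert P x) := by
  obtain ⟨⟨hx1, hx2⟩, hmin⟩ := hx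
  have hdisj : P ⊓ A = ⊥ := by
    have hat : IsAtom P := Submodule.isAtom_iff_finrank_eq_one.2 hP
    exact (hat.not_le_iff_disjoint.1 hPA).eq_bot
  refine ⟨⟨?_, ?_⟩, ?_⟩
  · intro B hB
    rcases Finset.mem_insert.1 hB with rfl | hB
    · exact hP
    · exact hx1 B hB
  · rw [Finset.sup_insert, hx2, id, sup_comm]
  · rintro b hb ⟨hb1, hb2⟩
    by_cases hPb : P ∈ b
    · have hlt : b.erase P ⊂ x := by
        refine (Finset.ssubset_iff_subset_ne).2 ⟨?_, ?_⟩
        · rw [← Finset.subset_insert_iff]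
          exact hb.subset
        · rintro rfl
          rw [Finset.insert_erase hPb] at hb
          exact (ssubset_irrefl _) hb
      refine hmin _ hlt ⟨fun B hB => hb1 B (Finset.mem_of_mem_erase hB), ?_⟩
      have hle : (b.erase P).sup id ≤ A := hx2 ▸ Finset.sup_mono hlt.subset
      rw [← Finset.insert_erase hPb, Finset.sup_insert, id, sup_comm] at hb2
      refine eq_of_le_of_inf_le_of_sup_le (z := P) hle ?_ hb2.ge
      rw [inf_comm, hdisj]
      exact bot_le
    · have hle : b ⊆ x := (Finset.subset_insert_iff_of_notMem hPb).1 hb.subset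
      refine hPA (le_sup_right.trans (hb2.ge.trans ?_))
      exact hx2 ▸ Finset.sup_mono hle

omit [Fintype F] [FiniteDimensional F V] in
lemma IsMinAtomicDecomp.le_of_mem {A P : Submodule F V} {x : Finset (Submodule F V)}
    (hx : IsMinAtomicDecomp A x) (hP : P ∈ x) : P ≤ A :=
  hx.1.2 ▸ Finset.le_sup (f := id) hP

omit [Fintype F] [FiniteDimensional F V] in
lemma injOn_insert_isMinAtomicDecomp [DecidableEq (Submodule F V)] {A P : Submodule F V}
    (hPA : ¬ P ≤ A) :
    Set.InjOn (fun x : Finset (Submodule F V) => insert P x) {x | IsMinAtomicDecomp A x} := by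
  intro x hx y hy hxy
  have h : (insert P x).erase P = (insert P y).erase P := congrArg (·.erase P) hxy
  rwa [Finset.erase_insert fun h => hPA (hx.le_of_mem h),
    Finset.erase_insert fun h => hPA (hy.le_of_mem h)] at h

lemma finite_setOf_isMinAtomicDecomp (S : Submodule F V) :
    {x : Finset (Submodule F V) | IsMinAtomicDecomp S x}.Finite := by
  have : Finite V := Module.finite_of_finite F
  have : Finite (Submodule F V) := Finite.of_injective _ SetLike.coe_injective
  exact Set.toFinite _

lemma NN_le_sup_atom {A P : Submodule F V} (hP : Module.finrank F P = 1) (hPA : ¬ P ≤ A) :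
    NN A ≤ NN (A ⊔ P) := by
  classical
  rw [NN, ← (injOn_insert_isMinAtomicDecomp hPA).ncard_image]
  refine Set.ncard_le_ncard ?_ (finite_setOf_isMinAtomicDecomp _)
  rintro _ ⟨x, hx, rfl⟩
  exact hx.insert_atom hP hPA

lemma NN_mono {A T : Submodule F V} (h : A ≤ T) : NN A ≤ NN T := by
  induction A using WellFoundedGT.induction with
  | ind A ih =>
    rcases h.eq_or_lt with rfl | hlt
    · exact le_rfl
    · obtain ⟨v, hvT, hvA⟩ := SetLike.exists_of_lt hlt
      have hv : v ≠ 0 := fun h0 => hvA (h0 ▸ A.zero_mem)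
      have hPA : ¬ F ∙ v ≤ A := by rwa [Submodule.span_singleton_le_iff_mem]
      refine (NN_le_sup_atom (finrank_span_singleton hv) hPA).trans (ih _ ?_ ?_)
      · exact left_lt_sup.2 hPA
      · exact sup_le h ((Submodule.span_singleton_le_iff_mem _ _).2 hvT)

/-- Two decomposition counts for `A` and `B` add up inside `T` when each is extended by an atom,
and the first atom can be told apart from all atoms of the second decomposition. -/
lemma NN_add_NN_le_of_atoms {A B T P Q : Submodule F V} (hP : Module.finrank F P = 1)
    (hQ : Module.finrank F Q = 1) (hPA : ¬ P ≤ A) (hPB : ¬ P ≤ B) (hQB : ¬ Q ≤ B)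
    (hPQ : P ≠ Q) (hAT : A ⊔ P = T) (hBT : B ⊔ Q = T) : NN A + NN B ≤ NN T := by
  classical
  rw [NN, NN, ← (injOn_insert_isMinAtomicDecomp hPA).ncard_image,
    ← (injOn_insert_isMinAtomicDecomp hQB).ncard_image, ← Set.ncard_union_eq ?_
      ((finite_setOf_isMinAtomicDecomp _).image _) ((finite_setOf_isMinAtomicDecomp _).image _)]
  · refine Set.ncard_le_ncard ?_ (finite_setOf_isMinAtomicDecomp _)
    rintro _ (⟨x, hx, rfl⟩ | ⟨x, hx, rfl⟩)
    · exact hAT ▸ hx.insert_atom hP hPA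
    · exact hBT ▸ hx.insert_atom hQ hQB
  · rw [Set.disjoint_left]
    rintro _ ⟨x, hx, rfl⟩ ⟨y, hy, hxy⟩
    have hmem : P ∈ insert Q y := by
      rw [show insert Q y = insert P x from hxy]
      exact Finset.mem_insert_self P x
    rcases Finset.mem_insert.1 hmem with h | h
    · exact hPQ h
    · exact hPB (hy.le_of_mem h)

omit [Fintype F] [FiniteDimensional F V] in
/-- Two proper subspaces of `T` do not cover `T`. -/
lemma exists_mem_notMem_notMem_of_lt {A B T : Submodule F V} (hA : A < T) (hB : B < T) :
    ∃ v ∈ T, v ∉ A ∧ v ∉ B := by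
  obtain ⟨a, haT, haA⟩ := SetLike.exists_of_lt hA
  obtain ⟨b, hbT, hbB⟩ := SetLike.exists_of_lt hB
  by_cases haB : a ∈ B
  · by_cases hbA : b ∈ A
    · exact ⟨a + b, T.add_mem haT hbT, fun h => haA ((A.add_mem_iff_left hbA).1 h),
        fun h => hbB ((B.add_mem_iff_right haB).1 h)⟩
    · exact ⟨b, hbT, hbA, hbB⟩
  · exact ⟨a, haT, haA, haB⟩

lemma NN_add_NN_le_of_covBy {A B T : Submodule F V} (hA : A ⋖ T) (hB : B ⋖ T) (hB0 : B ≠ ⊥) :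
    NN A + NN B ≤ NN T := by
  obtain ⟨v, hvT, hvA, hvB⟩ := exists_mem_notMem_notMem_of_lt hA.lt hB.lt
  obtain ⟨h, hhB, hh0⟩ := Submodule.exists_mem_ne_zero_of_ne_bot hB0
  have hvhB : v + h ∉ B := fun H => hvB ((B.add_mem_iff_left hhB).1 H)
  have hv0 : v ≠ 0 := fun h0 => hvB (h0 ▸ B.zero_mem)
  have hvh0 : v + h ≠ 0 := fun h0 => hvhB (h0 ▸ B.zero_mem)
  have hsup : ∀ {C : Submodule F V} {w : V}, C ⋖ T → w ∈ T → w ∉ C → C ⊔ F ∙ w = T := by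
    intro C w hC hwT hwC
    refine (hC.eq_or_eq le_sup_left
      (sup_le hC.le ((Submodule.span_singleton_le_iff_mem _ _).2 hwT))).resolve_left fun H => hwC ?_
    rw [← Submodule.span_singleton_le_iff_mem]
    exact sup_eq_left.1 H
  refine NN_add_NN_le_of_atoms (finrank_span_singleton hv0) (finrank_span_singleton hvh0)
    (by rwa [Submodule.span_singleton_le_iff_mem]) (by rwa [Submodule.span_singleton_le_iff_mem])
    (by rwa [Submodule.span_singleton_le_iff_mem]) ?_ (hsup hA hvT hvA)
    (hsup hB (T.add_mem hvT (hB.le hhB)) hvhB)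
  intro heq
  have hmem : h ∈ F ∙ v := by
    have : v + h ∈ F ∙ v := heq ▸ Submodule.mem_span_singleton_self _
    exact ((F ∙ v).add_mem_iff_right (Submodule.mem_span_singleton_self v)).1 this
  obtain ⟨c, rfl⟩ := Submodule.mem_span_singleton.1 hmem
  have hc : c ≠ 0 := fun h0 => hh0 (by rw [h0, zero_smul])
  exact hvB ((B.smul_mem_iff hc).1 hhB)

lemma NN_add_NN_le_inf_add {A B T : Submodule F V} (hA : A ≤ T) (hB : B ≤ T) :
    NN A + NN B ≤ NN (A ⊓ B) + NN T := by
  rcases hA.eq_or_lt with rfl | hA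
  · rw [inf_eq_right.2 hB, add_comm]
  rcases hB.eq_or_lt with rfl | hB
  · rw [inf_eq_left.2 hA.le]
  obtain ⟨H, hAH, hH⟩ := exists_le_covBy_of_lt hA
  obtain ⟨K, hBK, hK⟩ := exists_le_covBy_of_lt hB
  rcases eq_or_ne K ⊥ with rfl | hK0
  · rw [le_bot_iff.1 hBK, inf_bot_eq, add_comm]
    exact Nat.add_le_add_left (NN_mono hA.le) _
  · calc NN A + NN B ≤ NN H + NN K := Nat.add_le_add (NN_mono hAH) (NN_mono hBK)
      _ ≤ NN T := NN_add_NN_le_of_covBy hH hK hK0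
      _ ≤ NN (A ⊓ B) + NN T := Nat.le_add_left _ _

/-- For all subspaces `S, T, U ⊆ V`,
`𝔑(S ∩ T) + 𝔑(T ∩ U) ≤ 𝔑(S ∩ U) + 𝔑(T)`. -/
theorem NN_intersection_inequality (S T U : Submodule F V) :
    NN (S ⊓ T) + NN (T ⊓ U) ≤ NN (S ⊓ U) + NN T := by
  refine (NN_add_NN_le_inf_add inf_le_right inf_le_left).trans (Nat.add_le_add_right ?_ _)
  exact NN_mono (inf_le_inf inf_le_left inf_le_right)
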